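/- Let h₂ be the unique real t ≥ 0 satisfying ∫₁^∞ [P(s) − (P(s)² + P(2s))/2] e^{(1−s)t} ds = 0. Then for every real h ≥ 0, f(N₁, h) < f(N₂, h) if and only if h > h₂. -/

import Mathlib

open MeasureTheory Real

/-- The prime zeta function `P(s) = ∑_p p^{-s}` (sum over all primes). -/
noncomputable def primeZeta (s : ℝ) : ℝ := ∑' p : Nat.Primes, (p.1 : ℝ) ^ (-s)

/-- The set of `k`-almost primes: positive integers with exactly `k` prime
factors counted with multiplicity. -/
def almostPrimes (k : ℕ) : Set ℕ := {n | 0 < n ∧ n.primeFactorsList.length = k}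

/-- `P_k(s) = ∑_{n ∈ N_k} n^{-s}`; note `P_0(s) = 1` since `N_0 = {1}`. -/
noncomputable def Pk (k : ℕ) (s : ℝ) : ℝ := ∑' n : almostPrimes k, (n.1 : ℝ) ^ (-s)

/-- Translated sum `f(A, h) = ∑_{a ∈ A} 1/(a (log a + h))`. -/
noncomputable def transSum (A : Set ℕ) (h : ℝ) : ℝ :=
  ∑' a : A, 1 / ((a.1 : ℝ) * (Real.log a.1 + h))

/-!
Since `1 / (a (log a + h)) = ∫_{s > 1} a ^ (-s) e ^ ((1 - s) h) ds`, the difference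
`f(N₁, h) - f(N₂, h)` is the Laplace-type transform at `h` of `D = P - P₂`, where
`P₂(s) = (P(s)² + P(2s)) / 2` is the Dirichlet series of `N₂`. The ratio `P₂ / P` is strictly
decreasing, so `D` changes sign exactly once, from negative to positive, at some `s₀`. The
transform times `e ^ ((s₀ - 1) h)` is the integral of `D(s) e ^ ((s₀ - s) h)`, whose integrand is
strictly decreasing in `h` for every `s ≠ s₀`; so the transform passes from positive to negative
at its zero.
-/

section SignChange

theorem integral_pos_of_ae_pos {α : Type*} [MeasurableSpace α] {μ : Measure α} [NeZero μ]
    {f : α → ℝ} (hf : Integrable f μ) (hpos : ∀ᵐ x ∂μ, 0 < f x) : 0 < ∫ x, f x ∂μ := by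
  rw [integral_pos_iff_support_of_nonneg_ae (hpos.mono fun _ hx ↦ hx.le) hf]
  have hsupport : Function.support f =ᵐ[μ] Set.univ := by
    filter_upwards [hpos] with x hx
    exact eq_true hx.ne'
  rw [measure_congr hsupport]
  exact NeZero.pos _

variable {μ : Measure ℝ} [NeZero μ] {F : ℝ → ℝ} {c s₀ : ℝ}

theorem integral_mul_exp_lt_of_sign_change (hF : ∀ᵐ s ∂μ, 0 < F s * (s - s₀)) {t u : ℝ}
    (htu : t < u) (ht : Integrable (fun s ↦ F s * exp ((c - s) * t)) μ)
    (hu : Integrable (fun s ↦ F s * exp ((c - s) * u)) μ) :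
    ∫ s, F s * exp ((c - s) * u) ∂μ
      < exp ((c - s₀) * (u - t)) * ∫ s, F s * exp ((c - s) * t) ∂μ := by
  rw [← sub_pos, ← integral_const_mul, ← integral_sub (ht.const_mul _) hu]
  refine integral_pos_of_ae_pos ((ht.const_mul _).sub hu) ?_
  filter_upwards [hF] with s hs
  have hsplit : exp ((c - s) * u) = exp ((c - s) * (u - t)) * exp ((c - s) * t) := by
    rw [← exp_add]
    ring_nf
  have hfactor : exp ((c - s₀) * (u - t)) * (F s * exp ((c - s) * t)) - F s * exp ((c - s) * u)
      = F s * (exp ((c - s₀) * (u - t)) - exp ((c - s) * (u - t))) * exp ((c - s) * t) := by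
    rw [hsplit]
    ring
  rw [hfactor]
  refine mul_pos ?_ (exp_pos _)
  rcases mul_pos_iff.mp hs with ⟨hFs, hss₀⟩ | ⟨hFs, hss₀⟩
  · exact mul_pos hFs (sub_pos.mpr (exp_lt_exp.mpr (by nlinarith)))
  · exact mul_pos_of_neg_of_neg hFs (sub_neg.mpr (exp_lt_exp.mpr (by nlinarith)))

theorem integral_mul_exp_neg_iff_of_sign_change (hF : ∀ᵐ s ∂μ, 0 < F s * (s - s₀)) {t₀ t : ℝ}
    (hzero : ∫ s, F s * exp ((c - s) * t₀) ∂μ = 0)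
    (ht₀ : Integrable (fun s ↦ F s * exp ((c - s) * t₀)) μ)
    (ht : Integrable (fun s ↦ F s * exp ((c - s) * t)) μ) :
    ∫ s, F s * exp ((c - s) * t) ∂μ < 0 ↔ t₀ < t := by
  rcases lt_trichotomy t₀ t with hlt | rfl | hgt
  · have hneg := integral_mul_exp_lt_of_sign_change hF hlt ht₀ ht
    rw [hzero, mul_zero] at hneg
    exact iff_of_true hneg hlt
  · simp [hzero]
  · have hpos := integral_mul_exp_lt_of_sign_change hF hgt ht ht₀
    rw [hzero, mul_pos_iff_of_pos_left (exp_pos _)] at hpos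
    exact iff_of_false hpos.not_gt hgt.not_gt

theorem exists_sign_change_of_strictAntiOn {f : ℝ → ℝ} {c x y : ℝ}
    (hf : StrictAntiOn f (Set.Ioi c)) (hx : c < x) (hxy : f x ≤ y) :
    ∃ x₀, ∀ z, c < z → z ≠ x₀ → 0 < (y - f z) * (z - x₀) := by
  let S : Set ℝ := {z | c < z ∧ f z ≤ y}
  have hbdd : BddBelow S := ⟨c, fun z hz ↦ hz.1.le⟩
  refine ⟨sInf S, fun z hz hne ↦ ?_⟩
  rcases hne.lt_or_gt with hlt | hgt
  · have hyz : y < f z := not_le.mp fun hzy ↦ notMem_of_lt_csInf hlt hbdd ⟨hz, hzy⟩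
    exact mul_pos_of_neg_of_neg (sub_neg.mpr hyz) (sub_neg.mpr hlt)
  · obtain ⟨w, ⟨hcw, hwy⟩, hwz⟩ := exists_lt_of_csInf_lt (show S.Nonempty from ⟨x, hx, hxy⟩) hgt
    exact mul_pos (sub_pos.mpr ((hf hcw hz hwz).trans_le hwy)) (sub_pos.mpr hgt)

end SignChange

section Series

theorem tsum_sq_le_sq_tsum {ι : Type*} {f : ι → ℝ} (hf : Summable f) (hf₀ : ∀ i, 0 ≤ f i) :
    ∑' i, f i ^ 2 ≤ (∑' i, f i) ^ 2 := by
  have hle : ∀ i, f i ^ 2 ≤ f i * ∑' j, f j := fun i ↦ by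
    rw [sq]
    exact mul_le_mul_of_nonneg_left (hf.le_tsum i fun j _ ↦ hf₀ j) (hf₀ i)
  have hdom : Summable fun i ↦ f i * ∑' j, f j := hf.mul_right _
  calc ∑' i, f i ^ 2 ≤ ∑' i, f i * ∑' j, f j :=
        (hdom.of_nonneg_of_le (fun i ↦ sq_nonneg _) hle).tsum_le_tsum hle hdom
    _ = (∑' i, f i) ^ 2 := by rw [tsum_mul_right, sq]

theorem tsum_le_add_tsum_ge {ι R : Type*} [LinearOrder ι] [NormedAddCommGroup R]
    [CompleteSpace R] {g : ι × ι → R} (hg : Summable g) :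
    ∑' x : {x : ι × ι | x.1 ≤ x.2}, g x + ∑' x : {x : ι × ι | x.2 ≤ x.1}, g x
      = ∑' x, g x + ∑' i, g (i, i) := by
  have hunion : {x : ι × ι | x.1 ≤ x.2} ∪ {x | x.2 ≤ x.1} = Set.univ :=
    Set.eq_univ_of_forall fun x ↦ le_total x.1 x.2
  have hinter : {x : ι × ι | x.1 ≤ x.2} ∩ {x | x.2 ≤ x.1} = Set.range fun i ↦ (i, i) := by
    ext ⟨i, j⟩
    simp [← le_antisymm_iff, eq_comm]
  have hdiag : Function.Injective fun i : ι ↦ (i, i) := fun i j hij ↦ congrArg Prod.fst hij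
  have hsplit := Set.indicator_union_add_inter g {x | x.1 ≤ x.2} {x | x.2 ≤ x.1}
  rw [hunion, hinter, Set.indicator_univ] at hsplit
  rw [tsum_subtype, tsum_subtype, ← (hg.indicator _).tsum_add (hg.indicator _),
    ← tsum_range g hdiag, tsum_subtype, ← hg.tsum_add (hg.indicator _)]
  exact (tsum_congr (congrFun hsplit)).symm

theorem two_mul_tsum_sym2_mul {ι R : Type*} [NormedCommRing R] [CompleteSpace R] {f : ι → R}
    (hf : Summable fun i ↦ ‖f i‖) :
    2 * ∑' z : Sym2 ι, (z.map f).mul = (∑' i, f i) ^ 2 + ∑' i, f i ^ 2 := by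
  obtain ⟨_⟩ : Nonempty (LinearOrder ι) := ⟨IsWellOrder.linearOrder WellOrderingRel⟩
  let g : ι × ι → R := fun x ↦ f x.1 * f x.2
  have hsym2 : ∑' z : Sym2 ι, (z.map f).mul = ∑' x : {x : ι × ι | x.1 ≤ x.2}, g x :=
    (Sym2.sortEquiv.symm.tsum_eq fun z ↦ (z.map f).mul).symm
  have hswap : ∑' x : {x : ι × ι | x.2 ≤ x.1}, g x = ∑' x : {x : ι × ι | x.1 ≤ x.2}, g x := by
    let e : {x : ι × ι | x.2 ≤ x.1} ≃ {x : ι × ι | x.1 ≤ x.2} :=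
      (Equiv.prodComm ι ι).subtypeEquiv fun _ ↦ Iff.rfl
    rw [← e.tsum_eq]
    exact tsum_congr fun x ↦ mul_comm (f x.1.1) (f x.1.2)
  have hsum := tsum_le_add_tsum_ge (g := g) (summable_mul_of_summable_norm hf hf)
  rw [hswap, ← tsum_mul_tsum_of_summable_norm hf hf] at hsum
  rw [hsym2, two_mul, hsum]
  simp only [sq, g]

theorem summable_rpow_neg_of_le {ι : Type*} {a : ι → ℝ} {r s : ℝ} (ha : ∀ i, 1 ≤ a i)
    (hrs : r ≤ s) (hr : Summable fun i ↦ a i ^ (-r)) : Summable fun i ↦ a i ^ (-s) :=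
  hr.of_nonneg_of_le (fun i ↦ rpow_nonneg (zero_le_one.trans (ha i)) _) fun i ↦
    rpow_le_rpow_of_exponent_le (ha i) (neg_le_neg hrs)

theorem tsum_rpow_neg_le {ι : Type*} {a : ι → ℝ} {m r s : ℝ} (hm : 1 ≤ m) (ha : ∀ i, m ≤ a i)
    (hrs : r ≤ s) (hr : Summable fun i ↦ a i ^ (-r)) :
    ∑' i, a i ^ (-s) ≤ m ^ (r - s) * ∑' i, a i ^ (-r) := by
  rw [← tsum_mul_left]
  refine (summable_rpow_neg_of_le (fun i ↦ hm.trans (ha i)) hrs hr).tsum_le_tsum (fun i ↦ ?_)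
    (hr.mul_left _)
  have hm₀ : 0 < m := by linarith
  have hai : 0 < a i := hm₀.trans_le (ha i)
  calc a i ^ (-s) = a i ^ (r - s) * a i ^ (-r) := by rw [← rpow_add hai]; ring_nf
    _ ≤ m ^ (r - s) * a i ^ (-r) := by
      gcongr ?_ * _
      exact rpow_le_rpow_of_nonpos hm₀ (ha i) (by linarith)

theorem exp_tsum_primes_le_tsum {f : ℕ →*₀ ℝ} (hf : Summable f) :
    exp (∑' p : Nat.Primes, f p) ≤ ∑' n, f n := by
  have hexp : HasProd (fun p : Nat.Primes ↦ exp (f p)) (exp (∑' p : Nat.Primes, f p)) :=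
    (hf.subtype _).hasSum.rexp
  have heuler := EulerProduct.eulerProduct_completely_multiplicative_hasProd hf.norm
  refine le_of_tendsto_of_tendsto' hexp heuler fun S ↦
    Finset.prod_le_prod (fun p _ ↦ (exp_pos _).le) fun p _ ↦ ?_
  have hlt : f p < 1 := (le_abs_self _).trans_lt (hf.norm_lt_one (f := f.toMonoidHom) p.2.one_lt)
  calc exp (f p) = (exp (-f p))⁻¹ := by rw [exp_neg, inv_inv]
    _ ≤ (1 - f p)⁻¹ := inv_anti₀ (sub_pos.mpr hlt) (one_sub_le_exp_neg _)

theorem tsum_nat_rpow_neg_le {s : ℝ} (hs : 1 < s) : ∑' n : ℕ, (n : ℝ) ^ (-s) ≤ s / (s - 1) := by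
  have hshift : ∑' n : ℕ, (n : ℝ) ^ (-s) = ∑' n : ℕ, 1 / (n + 1 : ℝ) ^ s := by
    rw [(summable_nat_rpow.mpr (by linarith)).tsum_eq_zero_add, Nat.cast_zero,
      zero_rpow (by linarith), zero_add]
    refine tsum_congr fun n ↦ ?_
    rw [rpow_neg (Nat.cast_nonneg _), Nat.cast_add_one, one_div]
  have hzeta := ZetaAsymptotics.zeta_limit_aux1 hs
  have hterm : 0 ≤ s * ZetaAsymptotics.termTSum s :=
    mul_nonneg (by linarith) (tsum_nonneg fun n ↦ ZetaAsymptotics.term_nonneg _ _)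
  have hdiv : s / (s - 1) = 1 + 1 / (s - 1) := by
    field [(sub_pos.mpr hs).ne']
  linarith

end Series

section LaplaceTransform

theorem rpow_neg_mul_exp_eq {a : ℝ} (ha : 0 < a) (s h : ℝ) :
    a ^ (-s) * exp ((1 - s) * h) = exp h * exp (-(log a + h) * s) := by
  rw [rpow_def_of_pos ha, ← exp_add, ← exp_add]
  ring_nf

theorem integrableOn_rpow_neg_mul_exp {a h : ℝ} (ha : 0 < a) (hah : 0 < log a + h) (c : ℝ) :
    IntegrableOn (fun s ↦ a ^ (-s) * exp ((1 - s) * h)) (Set.Ioi c) := by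
  simp_rw [rpow_neg_mul_exp_eq ha]
  exact (integrableOn_exp_mul_Ioi (neg_neg_of_pos hah) c).const_mul _

theorem integral_rpow_neg_mul_exp {a h : ℝ} (ha : 0 < a) (hah : 0 < log a + h) :
    ∫ s in Set.Ioi (1 : ℝ), a ^ (-s) * exp ((1 - s) * h) = 1 / (a * (log a + h)) := by
  simp_rw [rpow_neg_mul_exp_eq ha]
  rw [integral_const_mul, integral_exp_mul_Ioi (neg_neg_of_pos hah), mul_one, neg_div_neg_eq,
    exp_neg, exp_add, exp_log ha]
  field

theorem transSum_eq_integral {A : Set ℕ} {h : ℝ} (hA : 0 ∉ A)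
    (hAh : ∀ a ∈ A, 0 < log a + h)
    (hint : IntegrableOn (fun s ↦ (∑' a : A, (a : ℝ) ^ (-s)) * exp ((1 - s) * h)) (Set.Ioi 1)) :
    transSum A h = ∫ s in Set.Ioi (1 : ℝ), (∑' a : A, (a : ℝ) ^ (-s)) * exp ((1 - s) * h) := by
  have hpos : ∀ a : A, (0 : ℝ) < a := fun a ↦
    Nat.cast_pos.mpr (Nat.pos_of_ne_zero fun ha ↦ hA (ha ▸ a.2))
  have hterm : ∀ a : A, IntegrableOn (fun s ↦ (a : ℝ) ^ (-s) * exp ((1 - s) * h)) (Set.Ioi 1) :=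
    fun a ↦ integrableOn_rpow_neg_mul_exp (hpos a) (hAh a a.2) 1
  have hsum : ∀ s ∈ Set.Ioi (1 : ℝ), Summable fun a : A ↦ (a : ℝ) ^ (-s) * exp ((1 - s) * h) :=
    fun s hs ↦ ((summable_nat_rpow.mpr (neg_lt_neg hs)).subtype A).mul_right _
  have hswap := hasSum_integral_of_dominated_convergence (μ := volume.restrict (Set.Ioi 1))
    (fun (a : A) s ↦ (a : ℝ) ^ (-s) * exp ((1 - s) * h))
    (fun a ↦ (hterm a).aestronglyMeasurable)
    (fun a ↦ ae_of_all _ fun s ↦ (norm_of_nonneg (by positivity)).le)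
    (ae_restrict_of_forall_mem measurableSet_Ioi hsum) (by simp_rw [tsum_mul_right]; exact hint)
    (ae_restrict_of_forall_mem measurableSet_Ioi fun s hs ↦ (hsum s hs).hasSum)
  simp only [tsum_mul_right] at hswap
  rw [← hswap.tsum_eq, transSum]
  exact tsum_congr fun a ↦ (integral_rpow_neg_mul_exp (hpos a) (hAh a a.2)).symm

end LaplaceTransform

section PrimeZeta

variable {s : ℝ}

theorem summable_primes_rpow_neg (hs : 1 < s) : Summable fun p : Nat.Primes ↦ (p : ℝ) ^ (-s) :=
  Nat.Primes.summable_rpow.mpr (by linarith)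

theorem primeZeta_pos (hs : 1 < s) : 0 < primeZeta s :=
  (summable_primes_rpow_neg hs).tsum_pos (fun p ↦ by positivity) ⟨2, Nat.prime_two⟩ (by positivity)

theorem primeZeta_le_two_rpow_mul {r : ℝ} (hr : 1 < r) (hrs : r ≤ s) :
    primeZeta s ≤ 2 ^ (r - s) * primeZeta r :=
  tsum_rpow_neg_le one_le_two (fun p ↦ Nat.ofNat_le_cast.mpr p.2.two_le) hrs
    (summable_primes_rpow_neg hr)

theorem strictAntiOn_primeZeta : StrictAntiOn primeZeta (Set.Ioi 1) := fun _ hr _ _ hrs ↦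
  (primeZeta_le_two_rpow_mul hr hrs.le).trans_lt <| mul_lt_of_lt_one_left (primeZeta_pos hr) <|
    rpow_lt_one_of_one_lt_of_neg one_lt_two (sub_neg.mpr hrs)

theorem primeZeta_two_mul_eq_tsum_sq (s : ℝ) :
    primeZeta (2 * s) = ∑' p : Nat.Primes, ((p : ℝ) ^ (-s)) ^ 2 :=
  tsum_congr fun p ↦ by
    rw [← rpow_mul_natCast (Nat.cast_nonneg _)]
    push_cast
    ring_nf

theorem primeZeta_two_mul_le_sq (hs : 1 < s) : primeZeta (2 * s) ≤ primeZeta s ^ 2 := by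
  rw [primeZeta_two_mul_eq_tsum_sq]
  exact tsum_sq_le_sq_tsum (summable_primes_rpow_neg hs) fun p ↦ by positivity

theorem exp_primeZeta_le (hs : 1 < s) : exp (primeZeta s) ≤ s / (s - 1) := by
  let f : ℕ →*₀ ℝ :=
    { toFun := fun n ↦ (n : ℝ) ^ (-s)
      map_zero' := by rw [Nat.cast_zero, zero_rpow (by linarith)]
      map_one' := by rw [Nat.cast_one, one_rpow]
      map_mul' := fun m n ↦ by rw [Nat.cast_mul, mul_rpow m.cast_nonneg n.cast_nonneg] }
  have hf : Summable f := summable_nat_rpow.mpr (neg_lt_neg hs)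
  exact (exp_tsum_primes_le_tsum hf).trans (tsum_nat_rpow_neg_le hs)

theorem primeZeta_two_lt_one : primeZeta 2 < 1 := by
  have hexp := exp_primeZeta_le one_lt_two
  have hlt := add_one_lt_exp (primeZeta_pos one_lt_two).ne'
  linarith

theorem primeZeta_pow_le (hs : 1 < s) (k : ℕ) :
    primeZeta s ^ k ≤ 2 ^ k * k.factorial * √(s / (s - 1)) := by
  have hexp : (primeZeta s / 2) ^ k / k.factorial ≤ √(s / (s - 1)) := by
    refine (pow_div_factorial_le_exp _ (half_pos (primeZeta_pos hs)).le k).trans ?_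
    rw [exp_half]
    exact sqrt_le_sqrt (exp_primeZeta_le hs)
  rw [div_pow, div_div, div_le_iff₀ (by positivity)] at hexp
  linarith

theorem aestronglyMeasurable_primeZeta :
    AEStronglyMeasurable primeZeta (volume.restrict (Set.Ioi 1)) :=
  (aemeasurable_restrict_of_antitoneOn measurableSet_Ioi
    strictAntiOn_primeZeta.antitoneOn).aestronglyMeasurable

theorem integrableOn_Ioc_primeZeta_pow (k : ℕ) :
    IntegrableOn (fun s ↦ primeZeta s ^ k) (Set.Ioc 1 2) := by
  have hdom : IntegrableOn (fun s : ℝ ↦ 2 ^ k * k.factorial * √2 * (s - 1) ^ (-(1 / 2) : ℝ))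
      (Set.Ioc 1 2) := by
    have hrpow := (intervalIntegral.intervalIntegrable_rpow' (a := 0) (b := 1)
      (r := -(1 / 2)) (by norm_num)).comp_sub_right 1
    rw [zero_add, one_add_one_eq_two, intervalIntegrable_iff_integrableOn_Ioc_of_le one_le_two]
      at hrpow
    exact hrpow.const_mul _
  refine hdom.mono' ((aestronglyMeasurable_primeZeta.mono_set Set.Ioc_subset_Ioi_self).pow k)
    (ae_restrict_of_forall_mem measurableSet_Ioc fun s ⟨hs, hs2⟩ ↦ ?_)
  have hs₀ : 0 < s - 1 := sub_pos.mpr hs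
  rw [norm_of_nonneg (pow_nonneg (primeZeta_pos hs).le k)]
  calc primeZeta s ^ k ≤ 2 ^ k * k.factorial * √(s / (s - 1)) := primeZeta_pow_le hs k
    _ ≤ 2 ^ k * k.factorial * √(2 / (s - 1)) := by gcongr
    _ = 2 ^ k * k.factorial * √2 * (s - 1) ^ (-(1 / 2) : ℝ) := by
      rw [sqrt_div zero_le_two, rpow_neg hs₀.le, ← sqrt_eq_rpow]
      ring

theorem primeZeta_pow_le_of_two_le {k : ℕ} (hk : k ≠ 0) (hs : 2 ≤ s) :
    primeZeta s ^ k ≤ 4 * 2 ^ (-s) := by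
  have hdecay : primeZeta s ≤ 2 ^ (2 - s) * primeZeta 2 :=
    primeZeta_le_two_rpow_mul one_lt_two hs
  have hle : primeZeta s ≤ 1 :=
    (strictAntiOn_primeZeta.antitoneOn (Set.mem_Ioi.mpr one_lt_two)
      (Set.mem_Ioi.mpr (by linarith)) hs).trans primeZeta_two_lt_one.le
  calc primeZeta s ^ k ≤ primeZeta s := pow_le_of_le_one (primeZeta_pos (by linarith)).le hle hk
    _ ≤ 2 ^ (2 - s) :=
      hdecay.trans (mul_le_of_le_one_right (by positivity) primeZeta_two_lt_one.le)
    _ = 4 * 2 ^ (-s) := by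
      rw [sub_eq_add_neg, rpow_add two_pos]
      norm_num

theorem integrableOn_primeZeta_pow_mul_exp {k : ℕ} (hk : k ≠ 0) {h : ℝ} (hh : -log 2 < h) :
    IntegrableOn (fun s ↦ primeZeta s ^ k * exp ((1 - s) * h)) (Set.Ioi 1) := by
  rw [← Set.Ioc_union_Ioi_eq_Ioi one_le_two]
  refine IntegrableOn.union ?_ ?_
  · rw [← intervalIntegrable_iff_integrableOn_Ioc_of_le one_le_two]
    refine IntervalIntegrable.mul_continuousOn ?_ (by fun_prop)
    exact (intervalIntegrable_iff_integrableOn_Ioc_of_le one_le_two).mpr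
      (integrableOn_Ioc_primeZeta_pow k)
  · have hdom := (integrableOn_rpow_neg_mul_exp two_pos (neg_lt_iff_pos_add'.mp hh) 2).const_mul 4
    have hmeas := aestronglyMeasurable_primeZeta.mono_set (Set.Ioi_subset_Ioi one_le_two)
    refine hdom.mono' ((hmeas.pow k).mul (by fun_prop))
      (ae_restrict_of_forall_mem measurableSet_Ioi fun s hs ↦ ?_)
    have hs1 : 1 < s := one_lt_two.trans hs
    rw [norm_of_nonneg (mul_nonneg (pow_nonneg (primeZeta_pos hs1).le k) (exp_pos _).le),
      ← mul_assoc]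
    exact mul_le_mul_of_nonneg_right (primeZeta_pow_le_of_two_le hk (Set.mem_Ioi.mp hs).le)
      (exp_pos _).le

end PrimeZeta

section AlmostPrimes

variable {s : ℝ}

theorem mem_almostPrimes {k n : ℕ} : n ∈ almostPrimes k ↔ Nat.IsAlmostPrime k n := by
  rw [almostPrimes, Set.mem_ofPred_eq, Nat.IsAlmostPrime, ArithmeticFunction.cardFactors_apply,
    Nat.pos_iff_ne_zero]

theorem two_le_of_mem_almostPrimes {k n : ℕ} (hk : k ≠ 0) (hn : n ∈ almostPrimes k) : 2 ≤ n := by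
  refine (Nat.two_le_iff n).mpr ⟨hn.1.ne', ?_⟩
  rintro rfl
  exact hk (by simpa using hn.2.symm)

theorem almostPrimes_one : almostPrimes 1 = {p | p.Prime} := by
  ext p
  rw [mem_almostPrimes, Nat.isAlmostPrime_one_iff, Set.mem_ofPred_eq]

theorem Pk_one : Pk 1 = primeZeta := by
  unfold Pk
  rw [almostPrimes_one]
  rfl

theorem sym2_primes_mul_injective :
    Function.Injective fun z : Sym2 Nat.Primes ↦ (z.map fun p : Nat.Primes ↦ (p : ℕ)).mul := by
  intro z w
  induction z with | _ p q
  induction w with | _ p' q'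
  intro hmul
  replace hmul : p.1 * q.1 = p'.1 * q'.1 := hmul
  have hp : p = p' ∨ p = q' := by
    have hdvd : p.1 ∣ p'.1 * q'.1 := ⟨q, hmul.symm⟩
    exact (p.2.dvd_mul.mp hdvd).imp
      (fun h ↦ Subtype.ext ((Nat.prime_dvd_prime_iff_eq p.2 p'.2).mp h))
      (fun h ↦ Subtype.ext ((Nat.prime_dvd_prime_iff_eq p.2 q'.2).mp h))
  rcases hp with rfl | rfl
  · rw [Subtype.ext (Nat.eq_of_mul_eq_mul_left p.2.pos hmul)]
  · rw [Subtype.ext (Nat.eq_of_mul_eq_mul_left p.2.pos (hmul.trans (mul_comm _ _))), Sym2.eq_swap]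

theorem range_sym2_primes_mul :
    Set.range (fun z : Sym2 Nat.Primes ↦ (z.map fun p : Nat.Primes ↦ (p : ℕ)).mul)
      = almostPrimes 2 := by
  ext n
  constructor
  · rintro ⟨z, rfl⟩
    induction z with | _ p q
    exact mem_almostPrimes.mpr (p.2.mul_isAlmostPrime_two q.2)
  · rintro ⟨hn, hlen⟩
    obtain ⟨p, q, hpq⟩ := List.length_eq_two.mp hlen
    have hprime : ∀ r ∈ [p, q], r.Prime := fun r hr ↦ Nat.prime_of_mem_primeFactorsList (hpq ▸ hr)
    refine ⟨s(⟨p, hprime p (by simp)⟩, ⟨q, hprime q (by simp)⟩), ?_⟩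
    have hprod := Nat.prod_primeFactorsList hn.ne'
    rw [hpq, List.prod_pair] at hprod
    exact hprod

theorem Pk_two (hs : 1 < s) : Pk 2 s = (primeZeta s ^ 2 + primeZeta (2 * s)) / 2 := by
  have hsym2 : Pk 2 s
      = ∑' z : Sym2 Nat.Primes, (z.map fun p : Nat.Primes ↦ (p : ℝ) ^ (-s)).mul := by
    unfold Pk
    rw [← range_sym2_primes_mul,
      tsum_range (fun n : ℕ ↦ (n : ℝ) ^ (-s)) sym2_primes_mul_injective]
    refine tsum_congr fun z ↦ ?_
    induction z with | _ p q
    simp only [Sym2.map_mk, Sym2.mul_mk]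
    rw [Nat.cast_mul, mul_rpow p.1.cast_nonneg q.1.cast_nonneg]
  rw [hsym2, primeZeta_two_mul_eq_tsum_sq, primeZeta,
    ← two_mul_tsum_sym2_mul (summable_primes_rpow_neg hs).norm]
  ring

theorem Pk_two_le_sq (hs : 1 < s) : Pk 2 s ≤ primeZeta s ^ 2 := by
  linarith [Pk_two hs, primeZeta_two_mul_le_sq hs]

theorem antitoneOn_Pk (k : ℕ) : AntitoneOn (Pk k) (Set.Ioi 1) := fun r hr s _ hrs ↦ by
  have hsum : Summable fun n : almostPrimes k ↦ (n : ℝ) ^ (-r) :=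
    (summable_nat_rpow.mpr (neg_lt_neg hr)).subtype _
  have hle := tsum_rpow_neg_le le_rfl (fun n ↦ Nat.one_le_cast.mpr n.2.1) hrs hsum
  rwa [one_rpow, one_mul] at hle

theorem integrableOn_Pk_two_mul_exp {h : ℝ} (hh : -log 2 < h) :
    IntegrableOn (fun s ↦ Pk 2 s * exp ((1 - s) * h)) (Set.Ioi 1) := by
  have hmeas : AEStronglyMeasurable (Pk 2) (volume.restrict (Set.Ioi 1)) :=
    (aemeasurable_restrict_of_antitoneOn measurableSet_Ioi (antitoneOn_Pk 2)).aestronglyMeasurable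
  refine (integrableOn_primeZeta_pow_mul_exp two_ne_zero hh).mono'
    (hmeas.mul (by fun_prop))
    (ae_restrict_of_forall_mem measurableSet_Ioi fun s hs ↦ ?_)
  have hnonneg : 0 ≤ Pk 2 s := tsum_nonneg fun n ↦ by positivity
  rw [norm_of_nonneg (mul_nonneg hnonneg (exp_pos _).le)]
  exact mul_le_mul_of_nonneg_right (Pk_two_le_sq hs) (exp_pos _).le

theorem integrableOn_Pk_one_mul_exp {h : ℝ} (hh : -log 2 < h) :
    IntegrableOn (fun s ↦ Pk 1 s * exp ((1 - s) * h)) (Set.Ioi 1) := by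
  simpa only [Pk_one, pow_one] using integrableOn_primeZeta_pow_mul_exp one_ne_zero hh

theorem transSum_almostPrimes {k : ℕ} (hk : k ≠ 0) {h : ℝ} (hh : -log 2 < h)
    (hint : IntegrableOn (fun s ↦ Pk k s * exp ((1 - s) * h)) (Set.Ioi 1)) :
    transSum (almostPrimes k) h = ∫ s in Set.Ioi (1 : ℝ), Pk k s * exp ((1 - s) * h) := by
  refine transSum_eq_integral (fun h0 ↦ h0.1.ne rfl) (fun n hn ↦ ?_) hint
  have hlog : log 2 ≤ log n :=
    log_le_log two_pos (Nat.ofNat_le_cast.mpr (two_le_of_mem_almostPrimes hk hn))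
  linarith

theorem strictAntiOn_Pk_two_div_Pk_one :
    StrictAntiOn (fun s ↦ Pk 2 s / Pk 1 s) (Set.Ioi 1) := by
  intro r hr s hs hrs
  have hs₀ : 0 < primeZeta s := primeZeta_pos hs
  have hlt : primeZeta s < primeZeta r := strictAntiOn_primeZeta hr hs hrs
  have hlt₂ : primeZeta (2 * s) < primeZeta (2 * r) := by
    have hr₁ : 1 < r := hr
    exact strictAntiOn_primeZeta (Set.mem_Ioi.mpr (by linarith)) (Set.mem_Ioi.mpr (by linarith))
      (by linarith)
  have hle : primeZeta (2 * s) ≤ primeZeta r * primeZeta s :=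
    (primeZeta_two_mul_le_sq hs).trans (sq (primeZeta s) ▸ mul_le_mul_of_nonneg_right hlt.le hs₀.le)
  have hcross : 0 < (primeZeta r - primeZeta s) * (primeZeta r * primeZeta s - primeZeta (2 * s))
      + (primeZeta (2 * r) - primeZeta (2 * s)) * primeZeta s :=
    add_pos_of_nonneg_of_pos (mul_nonneg (sub_pos.mpr hlt).le (sub_nonneg.mpr hle))
      (mul_pos (sub_pos.mpr hlt₂) hs₀)
  simp only [Pk_one, Pk_two hr, Pk_two hs]
  rw [div_lt_div_iff₀ hs₀ (hs₀.trans hlt)]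
  linarith

theorem exists_sign_change_Pk_one_sub_Pk_two :
    ∃ s₀, ∀ s, 1 < s → s ≠ s₀ → 0 < (Pk 1 s - Pk 2 s) * (s - s₀) := by
  have htwo : Pk 2 2 / Pk 1 2 ≤ 1 := by
    have hpos := primeZeta_pos one_lt_two
    rw [Pk_one, div_le_one hpos]
    nlinarith [Pk_two_le_sq one_lt_two, primeZeta_two_lt_one]
  obtain ⟨s₀, hs₀⟩ := exists_sign_change_of_strictAntiOn strictAntiOn_Pk_two_div_Pk_one
    one_lt_two htwo
  refine ⟨s₀, fun s hs hne ↦ ?_⟩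
  have hpos : 0 < Pk 1 s := Pk_one ▸ primeZeta_pos hs
  have hfactor : (Pk 1 s - Pk 2 s) * (s - s₀)
      = Pk 1 s * ((1 - Pk 2 s / Pk 1 s) * (s - s₀)) := by
    field [hpos.ne']
  rw [hfactor]
  exact mul_pos hpos (hs₀ s hs hne)

theorem integral_eq_integral_Pk_one_sub_Pk_two (t : ℝ) :
    ∫ s in Set.Ioi (1 : ℝ),
        (primeZeta s - (primeZeta s ^ 2 + primeZeta (2 * s)) / 2) * exp ((1 - s) * t)
      = ∫ s in Set.Ioi (1 : ℝ), (Pk 1 s - Pk 2 s) * exp ((1 - s) * t) :=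
  setIntegral_congr_fun measurableSet_Ioi fun s hs ↦ by simp only [Pk_one, Pk_two hs]

theorem integrableOn_Pk_one_sub_Pk_two_mul_exp {h : ℝ} (hh : -log 2 < h) :
    IntegrableOn (fun s ↦ (Pk 1 s - Pk 2 s) * exp ((1 - s) * h)) (Set.Ioi 1) := by
  simp_rw [sub_mul (Pk 1 _)]
  exact (integrableOn_Pk_one_mul_exp hh).sub (integrableOn_Pk_two_mul_exp hh)

theorem transSum_one_sub_transSum_two {h : ℝ} (hh : -log 2 < h) :
    transSum (almostPrimes 1) h - transSum (almostPrimes 2) h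
      = ∫ s in Set.Ioi (1 : ℝ), (Pk 1 s - Pk 2 s) * exp ((1 - s) * h) := by
  have h₁ := integrableOn_Pk_one_mul_exp hh
  have h₂ := integrableOn_Pk_two_mul_exp hh
  rw [transSum_almostPrimes one_ne_zero hh h₁, transSum_almostPrimes two_ne_zero hh h₂,
    ← integral_sub h₁ h₂]
  simp only [sub_mul (Pk 1 _)]

end AlmostPrimes

theorem stmt_1_general {h₂ h : ℝ} (hh₂ : -log 2 < h₂) (hh : -log 2 < h)
    (hzero : ∫ s in Set.Ioi (1 : ℝ),
      (primeZeta s - (primeZeta s ^ 2 + primeZeta (2 * s)) / 2) * exp ((1 - s) * h₂) = 0) :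
    transSum (almostPrimes 1) h < transSum (almostPrimes 2) h ↔ h₂ < h := by
  obtain ⟨s₀, hs₀⟩ := exists_sign_change_Pk_one_sub_Pk_two
  have hsign : ∀ᵐ s ∂volume.restrict (Set.Ioi (1 : ℝ)), 0 < (Pk 1 s - Pk 2 s) * (s - s₀) := by
    filter_upwards [ae_restrict_mem measurableSet_Ioi, Measure.ae_ne _ s₀] with s hs hne
    exact hs₀ s hs hne
  have : NeZero (volume.restrict (Set.Ioi (1 : ℝ))) := ⟨by simp⟩
  rw [integral_eq_integral_Pk_one_sub_Pk_two] at hzero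
  rw [← sub_neg, transSum_one_sub_transSum_two hh]
  exact integral_mul_exp_neg_iff_of_sign_change hsign hzero
    (integrableOn_Pk_one_sub_Pk_two_mul_exp hh₂) (integrableOn_Pk_one_sub_Pk_two_mul_exp hh)

/-- If `h₂` is the unique real `t ≥ 0` with
`∫₁^∞ [P(s) − (P(s)² + P(2s))/2] e^{(1−s)t} ds = 0`, then for every `h ≥ 0`,
`f(N₁,h) < f(N₂,h)` iff `h > h₂`. -/
theorem stmt_1 (h₂ : ℝ)
    (hh₂ : ∀ t : ℝ,
      (0 ≤ t ∧
        (∫ s in Set.Ioi (1:ℝ),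
          (primeZeta s - (primeZeta s ^ 2 + primeZeta (2 * s)) / 2) * Real.exp ((1 - s) * t)) = 0)
      ↔ t = h₂) :
    ∀ h : ℝ, 0 ≤ h →
      (transSum (almostPrimes 1) h < transSum (almostPrimes 2) h ↔ h₂ < h) := by
  intro h hh
  obtain ⟨h₂_nonneg, hzero⟩ := (hh₂ h₂).mpr rfl
  have hlog : -log 2 < 0 := neg_neg_of_pos (log_pos one_lt_two)
  exact stmt_1_general (hlog.trans_le h₂_nonneg) (hlog.trans_le hh) hzero
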